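/- Let ψ be a non-increasing approximation function with 0 < ψ(q) < 1/2 for all q and ∑_q ψ(q) = ∞. Then for every tamely Liouville irrational number γ, the set W(ψ,γ) has Lebesgue measure one. -/

import Mathlib

open MeasureTheory Filter Real

/-- Distance from a real number to the nearest integer. -/
noncomputable def dnint (x : ℝ) : ℝ := |x - round x|

/-- The inhomogeneous approximation set `W(ψ,γ)`. -/
noncomputable def W (ψ : ℕ → ℝ) (γ : ℝ) : Set ℝ :=
  {x ∈ Set.Icc (0:ℝ) 1 | {q : ℕ | 0 < q ∧ dnint (q * x - γ) < ψ q}.Infinite}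

/-- `σ_γ(Q)`: the infimum of all `σ > 0` with `‖qγ‖ ≥ q^{-σ}` for all `2 ≤ q ≤ Q`. -/
noncomputable def sigmaExp (γ : ℝ) (Q : ℕ) : ℝ :=
  sInf {σ : ℝ | 0 < σ ∧ ∀ q : ℕ, 2 ≤ q → q ≤ Q → (q : ℝ) ^ (-σ) ≤ dnint (q * γ)}

/-- `γ` is tamely Liouville if `σ_γ(Q) ≤ C (log₂ Q)^{1/4-ε}` for all `Q ≥ 2`. -/
def TamelyLiouville (γ : ℝ) : Prop :=
  ∃ ε > (0:ℝ), ∃ C > (0:ℝ), ∀ Q : ℕ, 2 ≤ Q →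
    sigmaExp γ Q ≤ C * (Real.logb 2 Q) ^ ((1:ℝ)/4 - ε)

/-!
Dirichlet's theorem gives, for most `x`, a fraction `a / b` with `Q / 8 < b ≤ Q` and
`|x - a / b| ≤ 1 / (b * Q)`; solving `q * a - p * b = ⌊b * γ⌋` with `Q < q ≤ 2 * Q` turns it into a
shifted fraction `(p + γ) / q` at distance `O(1 / Q ^ 2)` from `x`, whatever the real number `γ`.
Hence for `Q = 2 ^ n` large every ball contains a positive proportion of a maximal
`Q⁻²`-separated family of such fractions. Neighbourhoods of these families at different dyadic
scales are quasi-independent, so by the Chung–Erdős inequality and the condensed divergence of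
`∑ ψ q` their limsup meets every ball in a fixed proportion, and Lebesgue's density theorem makes
it of full measure.
-/

open Metric Topology Finset
open scoped ENNReal NNReal

section Measure

theorem ae_mem_of_eventually_le_measure_inter_closedBall_div {α : Type*} [MetricSpace α]
    [MeasurableSpace α] [BorelSpace α] [SecondCountableTopology α] [HasBesicovitchCovering α]
    {μ : Measure α} [IsLocallyFiniteMeasure μ] {A : Set α} (hA : MeasurableSet A) {c : ℝ≥0∞}
    (hc : c ≠ 0)
    (h : ∀ x, ∀ᶠ r in 𝓝[>] (0 : ℝ), c ≤ μ (A ∩ closedBall x r) / μ (closedBall x r)) :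
    ∀ᵐ x ∂μ, x ∈ A := by
  filter_upwards [Besicovitch.ae_tendsto_measure_inter_div_of_measurableSet μ hA] with x hx
  by_contra hxA
  rw [Set.indicator_of_notMem hxA] at hx
  exact hc (le_zero_iff.mp (ge_of_tendsto hx (h x)))

variable {α ι : Type*} [MeasurableSpace α] {μ : Measure α}

theorem lintegral_sq_sum_indicator_one {s : Finset ι} {B : ι → Set α}
    (hB : ∀ i ∈ s, MeasurableSet (B i)) :
    ∫⁻ x, (∑ i ∈ s, (B i).indicator 1 x) ^ 2 ∂μ = ∑ i ∈ s, ∑ j ∈ s, μ (B i ∩ B j) := by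
  have hsq : ∀ x, (∑ i ∈ s, (B i).indicator 1 x : ℝ≥0∞) ^ 2 =
      ∑ i ∈ s, ∑ j ∈ s, (B i ∩ B j).indicator 1 x := fun x ↦ by
    simp only [sq, sum_mul_sum, Set.inter_indicator_one, Pi.mul_apply]
  have hmeas : ∀ i ∈ s, ∀ j ∈ s, Measurable ((B i ∩ B j).indicator (1 : α → ℝ≥0∞)) :=
    fun i hi j hj ↦ measurable_one.indicator ((hB i hi).inter (hB j hj))
  simp_rw [hsq]
  rw [lintegral_finsetSum' _ fun i hi ↦ (Finset.measurable_fun_sum s (hmeas i hi)).aemeasurable]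
  refine sum_congr rfl fun i hi ↦ ?_
  rw [lintegral_finsetSum' _ fun j hj ↦ (hmeas i hi j hj).aemeasurable]
  exact sum_congr rfl fun j hj ↦ lintegral_indicator_one ((hB i hi).inter (hB j hj))

theorem sq_sum_measure_le {s : Finset ι} {B : ι → Set α} (hB : ∀ i ∈ s, MeasurableSet (B i)) :
    (∑ i ∈ s, μ (B i)) ^ 2 ≤ μ (⋃ i ∈ s, B i) * ∑ i ∈ s, ∑ j ∈ s, μ (B i ∩ B j) := by
  set U := ⋃ i ∈ s, B i
  have hU : MeasurableSet U := s.measurableSet_biUnion hB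
  let f : α → ℝ≥0∞ := fun x ↦ ∑ i ∈ s, (B i).indicator 1 x
  have hmeas : ∀ i ∈ s, Measurable ((B i).indicator (1 : α → ℝ≥0∞)) := fun i hi ↦
    measurable_one.indicator (hB i hi)
  have hf : Measurable f := Finset.measurable_fun_sum s hmeas
  have hfU : ∀ x, f x = U.indicator 1 x * f x := by
    intro x
    by_cases hx : x ∈ U
    · rw [Set.indicator_of_mem hx, Pi.one_apply, one_mul]
    · rw [Set.indicator_of_notMem hx, zero_mul]
      exact sum_eq_zero fun i hi ↦ Set.indicator_of_notMem (fun h ↦ hx (Set.mem_biUnion hi h)) _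
  have hfirst : ∫⁻ x, f x ∂μ = ∑ i ∈ s, μ (B i) := by
    rw [lintegral_finsetSum' _ fun i hi ↦ (hmeas i hi).aemeasurable]
    exact sum_congr rfl fun i hi ↦ lintegral_indicator_one (hB i hi)
  have hUsq : ∫⁻ x, U.indicator 1 x ^ 2 ∂μ = μ U := by
    rw [← lintegral_indicator_one hU]
    refine lintegral_congr fun x ↦ ?_
    by_cases hx : x ∈ U <;> simp [hx]
  have hCS := ENNReal.lintegral_mul_le_Lp_mul_Lq μ Real.HolderConjugate.two_two
    (measurable_one.indicator hU).aemeasurable hf.aemeasurable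
  simp only [Pi.mul_apply, ENNReal.rpow_two] at hCS
  rw [hUsq, lintegral_sq_sum_indicator_one hB, ← lintegral_congr hfU, hfirst,
    ← ENNReal.mul_rpow_of_nonneg _ _ (by norm_num)] at hCS
  calc (∑ i ∈ s, μ (B i)) ^ 2 ≤ ((μ U * ∑ i ∈ s, ∑ j ∈ s, μ (B i ∩ B j)) ^ (1 / 2 : ℝ)) ^ 2 := by
        gcongr
    _ = μ U * ∑ i ∈ s, ∑ j ∈ s, μ (B i ∩ B j) := by
        rw [← ENNReal.rpow_two, ← ENNReal.rpow_mul]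
        norm_num

theorem sq_sum_measureReal_le {s : Finset ι} {B : ι → Set α} (hB : ∀ i ∈ s, MeasurableSet (B i))
    (hfin : ∀ i ∈ s, μ (B i) ≠ ∞) :
    (∑ i ∈ s, μ.real (B i)) ^ 2 ≤
      μ.real (⋃ i ∈ s, B i) * ∑ i ∈ s, ∑ j ∈ s, μ.real (B i ∩ B j) := by
  have hinter : ∀ i ∈ s, ∀ j ∈ s, μ (B i ∩ B j) ≠ ∞ := fun i hi j _ ↦
    measure_ne_top_of_subset Set.inter_subset_left (hfin i hi)
  have hrow : ∀ i ∈ s, ∑ j ∈ s, μ (B i ∩ B j) ≠ ∞ := fun i hi ↦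
    ENNReal.sum_ne_top.mpr (hinter i hi)
  have hunion : μ (⋃ i ∈ s, B i) ≠ ∞ :=
    ((measure_biUnion_finset_le s B).trans_lt (ENNReal.sum_lt_top.mpr fun i hi ↦
      (hfin i hi).lt_top)).ne
  have h := ENNReal.toReal_mono
    (ENNReal.mul_ne_top hunion (ENNReal.sum_ne_top.mpr hrow)) (sq_sum_measure_le (μ := μ) hB)
  rw [ENNReal.toReal_pow, ENNReal.toReal_mul, ENNReal.toReal_sum hfin,
    ENNReal.toReal_sum hrow] at h
  rwa [sum_congr rfl fun i hi ↦ ENNReal.toReal_sum (hinter i hi)] at h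

theorem sum_sum_le_two_mul_sum_sum_filter_le [LinearOrder ι] (s : Finset ι) {f : ι → ι → ℝ}
    (hf : ∀ i j, 0 ≤ f i j) (hsymm : ∀ i j, f i j = f j i) :
    ∑ i ∈ s, ∑ j ∈ s, f i j ≤ 2 * ∑ j ∈ s, ∑ i ∈ s with i ≤ j, f i j := by
  have hsplit : ∀ i j, f i j ≤ (if i ≤ j then f i j else 0) + (if j ≤ i then f j i else 0) := by
    intro i j
    rcases le_total i j with hij | hij
    · rw [if_pos hij]
      split_ifs <;> linarith [hf j i]
    · rw [if_pos hij, hsymm i j]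
      split_ifs <;> linarith [hf j i]
  calc ∑ i ∈ s, ∑ j ∈ s, f i j
      ≤ ∑ i ∈ s, ∑ j ∈ s, ((if i ≤ j then f i j else 0) + (if j ≤ i then f j i else 0)) :=
        sum_le_sum fun i _ ↦ sum_le_sum fun j _ ↦ hsplit i j
    _ = 2 * ∑ j ∈ s, ∑ i ∈ s with i ≤ j, f i j := by
        simp only [sum_add_distrib, sum_filter]
        rw [sum_comm, two_mul]

theorem sum_filter_le_pow_sub_le {ρ : ℝ} (hρ₀ : 0 ≤ ρ) (hρ₁ : ρ < 1) (s : Finset ℕ) (n : ℕ) :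
    ∑ m ∈ s with m ≤ n, ρ ^ (n - m) ≤ (1 - ρ)⁻¹ := by
  have hinj : Set.InjOn (fun m ↦ n - m) ↑(s.filter (· ≤ n)) := by
    intro m hm m' hm' h
    have := (mem_filter.mp hm).2
    have := (mem_filter.mp hm').2
    lia
  calc ∑ m ∈ s with m ≤ n, ρ ^ (n - m) = ∑ k ∈ (s.filter (· ≤ n)).image (n - ·), ρ ^ k :=
        (sum_image (f := (ρ ^ ·)) hinj).symm
    _ ≤ ∑' k, ρ ^ k :=
        (summable_geometric_of_lt_one hρ₀ hρ₁).sum_le_tsum _ fun k _ ↦ pow_nonneg hρ₀ k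
    _ = (1 - ρ)⁻¹ := tsum_geometric_of_lt_one hρ₀ hρ₁

theorem sum_sum_measureReal_inter_le {s : Finset ℕ} {E : ℕ → Set α} {δ : ℕ → ℝ} {b ρ : ℝ}
    (hb : 0 ≤ b) (hρ₀ : 0 ≤ ρ) (hρ₁ : ρ < 1) (hδ : ∀ n ∈ s, 0 ≤ δ n)
    (hinter : ∀ m ∈ s, ∀ n ∈ s, m ≤ n →
      μ.real (E m ∩ E n) ≤ b * (δ m * δ n + δ n * ρ ^ (n - m))) :
    ∑ m ∈ s, ∑ n ∈ s, μ.real (E m ∩ E n) ≤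
      2 * b * ((∑ n ∈ s, δ n) ^ 2 + (1 - ρ)⁻¹ * ∑ n ∈ s, δ n) := by
  have hcol : ∀ n ∈ s, ∑ m ∈ s with m ≤ n, μ.real (E m ∩ E n) ≤
      b * ((∑ m ∈ s, δ m) * δ n + (1 - ρ)⁻¹ * δ n) := by
    intro n hn
    calc ∑ m ∈ s with m ≤ n, μ.real (E m ∩ E n)
        ≤ ∑ m ∈ s with m ≤ n, b * (δ m * δ n + δ n * ρ ^ (n - m)) :=
          sum_le_sum fun m hm ↦ hinter m (mem_filter.mp hm).1 n hn (mem_filter.mp hm).2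
      _ = b * ((∑ m ∈ s with m ≤ n, δ m) * δ n + (∑ m ∈ s with m ≤ n, ρ ^ (n - m)) * δ n) := by
          rw [← mul_sum, sum_add_distrib, sum_mul, ← mul_sum, mul_comm (δ n)]
      _ ≤ b * ((∑ m ∈ s, δ m) * δ n + (1 - ρ)⁻¹ * δ n) := by
          have := hδ n hn
          gcongr b * (?_ * δ n + ?_ * δ n)
          · exact sum_le_sum_of_subset_of_nonneg (filter_subset _ _) fun m hm _ ↦ hδ m hm
          · exact sum_filter_le_pow_sub_le hρ₀ hρ₁ s n
  calc ∑ m ∈ s, ∑ n ∈ s, μ.real (E m ∩ E n)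
      ≤ 2 * ∑ n ∈ s, ∑ m ∈ s with m ≤ n, μ.real (E m ∩ E n) :=
        sum_sum_le_two_mul_sum_sum_filter_le s (fun _ _ ↦ measureReal_nonneg)
          fun m n ↦ by rw [Set.inter_comm]
    _ ≤ 2 * ∑ n ∈ s, b * ((∑ m ∈ s, δ m) * δ n + (1 - ρ)⁻¹ * δ n) := by
        gcongr with n hn
        exact hcol n hn
    _ = 2 * b * ((∑ n ∈ s, δ n) ^ 2 + (1 - ρ)⁻¹ * ∑ n ∈ s, δ n) := by
        rw [← mul_sum, sum_add_distrib, ← mul_sum, ← mul_sum]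
        ring

theorem sq_le_mul_measureReal_biUnion {s : Finset ℕ} {E : ℕ → Set α} {δ : ℕ → ℝ} {a b ρ : ℝ}
    (hE : ∀ n ∈ s, MeasurableSet (E n)) (hfin : ∀ n ∈ s, μ (E n) ≠ ∞)
    (ha : 0 ≤ a) (hb : 0 ≤ b) (hρ₀ : 0 ≤ ρ) (hρ₁ : ρ < 1) (hδ : ∀ n ∈ s, 0 ≤ δ n)
    (hsum : 1 ≤ ∑ n ∈ s, δ n) (hlower : ∀ n ∈ s, a * δ n ≤ μ.real (E n))
    (hinter : ∀ m ∈ s, ∀ n ∈ s, m ≤ n →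
      μ.real (E m ∩ E n) ≤ b * (δ m * δ n + δ n * ρ ^ (n - m))) :
    a ^ 2 ≤ 2 * b * (1 + (1 - ρ)⁻¹) * μ.real (⋃ n ∈ s, E n) := by
  set S := ∑ n ∈ s, δ n with hS
  have hmean : a * S ≤ ∑ n ∈ s, μ.real (E n) := by
    rw [hS, mul_sum]
    exact sum_le_sum hlower
  refine le_of_mul_le_mul_right ?_ (show 0 < S ^ 2 by positivity)
  calc a ^ 2 * S ^ 2 = (a * S) ^ 2 := (mul_pow a S 2).symm
    _ ≤ (∑ n ∈ s, μ.real (E n)) ^ 2 := by gcongr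
    _ ≤ μ.real (⋃ n ∈ s, E n) * ∑ m ∈ s, ∑ n ∈ s, μ.real (E m ∩ E n) :=
        sq_sum_measureReal_le hE hfin
    _ ≤ μ.real (⋃ n ∈ s, E n) * (2 * b * (S ^ 2 + (1 - ρ)⁻¹ * S)) := by
        gcongr
        exact sum_sum_measureReal_inter_le hb hρ₀ hρ₁ hδ hinter
    _ ≤ μ.real (⋃ n ∈ s, E n) * (2 * b * (S ^ 2 + (1 - ρ)⁻¹ * S ^ 2)) := by
        have : 0 ≤ (1 - ρ)⁻¹ := inv_nonneg.mpr (sub_nonneg.mpr hρ₁.le)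
        gcongr
        nlinarith
    _ = 2 * b * (1 + (1 - ρ)⁻¹) * μ.real (⋃ n ∈ s, E n) * S ^ 2 := by ring

end Measure

section Packing

theorem exists_finset_isSeparated_isCover {X : Type*} [PseudoEMetricSpace X] {A : Set X}
    (hA : TotallyBounded A) {R : ℝ≥0} (hR : R ≠ 0) :
    ∃ P : Finset X, ↑P ⊆ A ∧ IsSeparated R (P : Set X) ∧ IsCover R A (P : Set X) := by
  obtain ⟨N, -, hNfin, hN⟩ :=
    exists_finite_isCover_of_totallyBounded (ε := R / 2) (by simpa using hR) hA
  have hpack : packingNumber R A ≠ ⊤ := by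
    refine ((?_ : packingNumber R A ≤ N.encard).trans_lt hNfin.encard_lt_top).ne
    rw [← mul_div_cancel₀ R two_ne_zero]
    exact (packingNumber_two_mul_le_externalCoveringNumber (R / 2) A).trans
      hN.externalCoveringNumber_le_encard
  have hfin : (maximalSeparatedSet R A).Finite := by
    rwa [← Set.encard_ne_top_iff, encard_maximalSeparatedSet hpack]
  refine ⟨hfin.toFinset, ?_⟩
  rw [hfin.coe_toFinset]
  exact ⟨maximalSeparatedSet_subset, isSeparated_maximalSeparatedSet,
    isCover_maximalSeparatedSet hpack⟩

theorem dist_lt_of_isSeparated {X : Type*} [PseudoMetricSpace X] {s : Set X} {R : ℝ≥0}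
    (hs : IsSeparated R s) {x y : X} (hx : x ∈ s) (hy : y ∈ s) (hxy : x ≠ y) : R < dist x y := by
  have h : (R : ℝ≥0∞) < edist x y := hs hx hy hxy
  rw [edist_nndist, ENNReal.coe_lt_coe] at h
  exact_mod_cast h

variable {P : Finset ℝ} {R : ℝ≥0} {r : ℝ}

theorem volume_real_thickening_of_isSeparated (hP : IsSeparated R (P : Set ℝ)) (hr : 0 ≤ r)
    (hrR : 2 * r ≤ R) : volume.real (thickening r (P : Set ℝ)) = #P * (2 * r) := by
  have hdisj : (P : Set ℝ).PairwiseDisjoint (ball · r) := fun x hx y hy hxy ↦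
    ball_disjoint_ball (by linarith [dist_lt_of_isSeparated hP hx hy hxy])
  rw [thickening_eq_biUnion_ball]
  simp only [mem_coe]
  rw [measureReal_biUnion_finset hdisj (fun _ _ ↦ measurableSet_ball)
    fun _ _ ↦ measure_ball_lt_top.ne, sum_congr rfl fun x _ ↦ Real.volume_real_ball hr,
    sum_const, nsmul_eq_mul]

theorem card_mul_le_of_isSeparated (hP : IsSeparated R (P : Set ℝ)) {c s : ℝ} (hs : 0 ≤ s)
    (hPs : ↑P ⊆ closedBall c s) : #P * (R : ℝ) ≤ 2 * s + R := by
  have hsub : thickening ((R : ℝ) / 2) (P : Set ℝ) ⊆ closedBall c (s + R / 2) := by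
    rw [thickening_eq_biUnion_ball]
    exact Set.iUnion₂_subset fun x hx ↦ ball_subset_closedBall.trans
      (closedBall_subset_closedBall' (by linarith [mem_closedBall.mp (hPs hx)]))
  calc #P * (R : ℝ) = volume.real (thickening ((R : ℝ) / 2) (P : Set ℝ)) := by
        rw [volume_real_thickening_of_isSeparated hP (by positivity) (by linarith)]
        ring
    _ ≤ volume.real (closedBall c (s + R / 2)) := measureReal_mono hsub measure_closedBall_lt_top.ne
    _ = 2 * s + R := by
        rw [Real.volume_real_closedBall (by positivity)]
        ring

theorem volume_real_ball_inter_thickening_le (hP : IsSeparated R (P : Set ℝ)) (hR : 0 < R)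
    (hr : 0 ≤ r) (hrR : 2 * r ≤ R) (c : ℝ) {s : ℝ} (hs : 0 ≤ s) :
    volume.real (ball c s ∩ thickening r (P : Set ℝ)) ≤ (2 * (s + r) / R + 1) * (2 * r) := by
  let P' := P.filter fun x ↦ dist x c ≤ s + r
  have hP' : IsSeparated R (P' : Set ℝ) := hP.subset (coe_subset.mpr (filter_subset _ _))
  have hsub : ball c s ∩ thickening r (P : Set ℝ) ⊆ thickening r (P' : Set ℝ) := by
    rintro x ⟨hxc, hx⟩
    obtain ⟨y, hy, hxy⟩ := mem_thickening_iff.mp hx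
    refine mem_thickening_iff.mpr ⟨y, mem_coe.mpr (mem_filter.mpr ⟨hy, ?_⟩), hxy⟩
    linarith [dist_triangle_left y c x, mem_ball.mp hxc]
  have hcard : (#P' : ℝ) ≤ 2 * (s + r) / R + 1 := by
    have h := card_mul_le_of_isSeparated hP' (add_nonneg hs hr)
      fun x hx ↦ (mem_filter.mp (mem_coe.mp hx)).2
    rw [div_add_one (by positivity), le_div_iff₀ (by positivity)]
    exact h
  calc volume.real (ball c s ∩ thickening r (P : Set ℝ))
      ≤ volume.real (thickening r (P' : Set ℝ)) :=
        measureReal_mono hsub P'.finite_toSet.isBounded.thickening.measure_lt_top.ne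
    _ = #P' * (2 * r) := volume_real_thickening_of_isSeparated hP' hr hrR
    _ ≤ (2 * (s + r) / R + 1) * (2 * r) := by gcongr

theorem volume_real_thickening_inter_thickening_le (hP : IsSeparated R (P : Set ℝ)) (hR : 0 < R)
    (hr : 0 ≤ r) (hrR : 2 * r ≤ R) (Q : Finset ℝ) {s : ℝ} (hs : 0 ≤ s) :
    volume.real (thickening s (Q : Set ℝ) ∩ thickening r (P : Set ℝ)) ≤
      #Q * ((2 * (s + r) / R + 1) * (2 * r)) := by
  rw [thickening_eq_biUnion_ball (E := (Q : Set ℝ)), Set.iUnion₂_inter]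
  calc volume.real (⋃ x ∈ Q, ball x s ∩ thickening r (P : Set ℝ))
      ≤ ∑ x ∈ Q, volume.real (ball x s ∩ thickening r (P : Set ℝ)) :=
        measureReal_biUnion_finset_le _ _
    _ ≤ #Q • ((2 * (s + r) / R + 1) * (2 * r)) :=
        sum_le_card_nsmul _ _ _ fun x _ ↦ volume_real_ball_inter_thickening_le hP hR hr hrR x hs
    _ = #Q * ((2 * (s + r) / R + 1) * (2 * r)) := nsmul_eq_mul _ _

end Packing

section ShiftedFractions

theorem exists_mem_Ioc_mul_sub_mul_eq {a b : ℤ} (hab : IsCoprime a b) (hb : 0 < b) (t Q : ℤ) :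
    ∃ q ∈ Set.Ioc Q (Q + b), ∃ p, q * a - p * b = t := by
  obtain ⟨u, v, huv⟩ := hab
  refine ⟨_, toIocMod_mem_Ioc hb Q (u * t), -(v * t + toIocDiv hb Q (u * t) * a), ?_⟩
  rw [← self_sub_toIocDiv_zsmul, smul_eq_mul]
  linear_combination t * huv

/-- The shifted fractions `(p + γ) / q` with denominators in the dyadic range `Q < q ≤ 2 * Q`.
At such a point `y` one has `q * y - γ = p`, so nearby points `x` make `‖q * x - γ‖` small. -/
def shiftedFractions (γ : ℝ) (Q : ℕ) : Set ℝ :=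
  {y | ∃ q : ℕ, ∃ p : ℤ, Q < q ∧ q ≤ 2 * Q ∧ y = (p + γ) / q}

theorem exists_mem_shiftedFractions_abs_sub_le (γ : ℝ) {Q : ℕ} {x : ℝ} {r : ℚ} (hr : r.den ≤ Q)
    (hx : |x - r| ≤ 1 / (r.den * Q)) :
    ∃ y ∈ shiftedFractions γ Q, |x - y| ≤ 2 / (r.den * Q) := by
  have : (0 : ℝ) < r.den := mod_cast r.den_pos
  have hcop : IsCoprime r.num (r.den : ℤ) := Rat.isCoprime_num_den r
  obtain ⟨q, ⟨hQq, hqQ⟩, p, hpq⟩ :=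
    exists_mem_Ioc_mul_sub_mul_eq hcop (mod_cast r.den_pos) ⌊r.den * γ⌋ Q
  lift q to ℕ using by lia
  have hQ : (0 : ℝ) < Q := mod_cast r.den_pos.trans_le hr
  have hQq' : (Q : ℝ) < q := mod_cast hQq
  have hq : (0 : ℝ) < q := hQ.trans hQq'
  refine ⟨(p + γ) / q, ⟨q, p, by lia, by lia, rfl⟩, ?_⟩
  have hpq' : (q : ℝ) * r.num - p * r.den = ⌊r.den * γ⌋ := mod_cast hpq
  have hry : r - (p + γ) / q = -Int.fract (r.den * γ) / (r.den * q) := by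
    rw [Int.fract, ← hpq', Rat.cast_def]
    field_simp
    ring
  have hr_sub : |r - (p + γ) / q| ≤ 1 / (r.den * Q) := by
    rw [hry, abs_div, abs_neg, Int.abs_fract, abs_of_pos (by positivity)]
    gcongr
    exact (Int.fract_lt_one _).le
  calc |x - (p + γ) / q| ≤ |x - r| + |r - (p + γ) / q| := abs_sub_le _ _ _
    _ ≤ 1 / (r.den * Q) + 1 / (r.den * Q) := add_le_add hx hr_sub
    _ = 2 / (r.den * Q) := by ring

theorem card_Icc_ceil_floor_le {u v : ℝ} (huv : u ≤ v) : (#(Icc ⌈u⌉ ⌊v⌋) : ℝ) ≤ v - u + 1 := by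
  have hcast : (#(Icc ⌈u⌉ ⌊v⌋) : ℝ) = max (⌊v⌋ + 1 - ⌈u⌉ : ℝ) 0 := by
    rw [Int.card_Icc]
    exact mod_cast Int.toNat_eq_max _
  rw [hcast]
  exact max_le (by linarith [Int.floor_le v, Int.le_ceil u]) (by linarith)

theorem volume_real_closedBall_inter_near_fractions_le {b : ℝ} (hb : 0 < b) (x₀ : ℝ) {h ε : ℝ}
    (hh : 0 ≤ h) (hε : 0 ≤ ε) :
    volume.real {x ∈ closedBall x₀ h | ∃ a : ℤ, |x - a / b| ≤ ε} ≤
      (2 * b * (h + ε) + 1) * (2 * ε) := by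
  set I := Icc ⌈b * (x₀ - h - ε)⌉ ⌊b * (x₀ + h + ε)⌋
  have hsub : {x ∈ closedBall x₀ h | ∃ a : ℤ, |x - a / b| ≤ ε} ⊆
      ⋃ a ∈ I, closedBall ((a : ℝ) / b) ε := by
    rintro x ⟨hx, a, ha⟩
    refine Set.mem_biUnion (mem_coe.mpr (mem_Icc.mpr ⟨Int.ceil_le.mpr ?_, Int.le_floor.mpr ?_⟩)) ha
    all_goals
      rw [mem_closedBall, Real.dist_eq, abs_le] at hx
      rw [abs_le] at ha
    · rw [← le_div_iff₀' hb]
      linarith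
    · rw [← div_le_iff₀' hb]
      linarith
  have hbdd : Bornology.IsBounded (⋃ a ∈ I, closedBall ((a : ℝ) / b) ε) :=
    (Bornology.isBounded_biUnion_finset I).mpr fun _ _ ↦ isBounded_closedBall
  calc volume.real {x ∈ closedBall x₀ h | ∃ a : ℤ, |x - a / b| ≤ ε}
      ≤ volume.real (⋃ a ∈ I, closedBall ((a : ℝ) / b) ε) :=
        measureReal_mono hsub hbdd.measure_lt_top.ne
    _ ≤ ∑ a ∈ I, volume.real (closedBall ((a : ℝ) / b) ε) := measureReal_biUnion_finset_le _ _
    _ = #I * (2 * ε) := by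
        simp only [Real.volume_real_closedBall hε, sum_const, nsmul_eq_mul]
    _ ≤ (b * (x₀ + h + ε) - b * (x₀ - h - ε) + 1) * (2 * ε) := by
        gcongr
        exact card_Icc_ceil_floor_le (by gcongr; linarith)
    _ = (2 * b * (h + ε) + 1) * (2 * ε) := by ring

/-- The points within the Dirichlet distance `1 / (r.den * Q)` of a rational `r` of denominator at
most `Q / 8`; all other points are close to shifted fractions of order `Q`. -/
def nearSmallDenom (Q : ℕ) : Set ℝ :=
  {x | ∃ r : ℚ, 8 * r.den ≤ Q ∧ |x - r| ≤ 1 / (r.den * Q)}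

theorem volume_real_closedBall_inter_nearSmallDenom_le {Q : ℕ} (hQ : 0 < Q) (x₀ : ℝ) {h : ℝ}
    (hh : 0 ≤ h) :
    volume.real (closedBall x₀ h ∩ nearSmallDenom Q) ≤
      h / 2 + 6 * ((Q : ℝ)⁻¹ * ∑ i ∈ range Q, 1 / ((i : ℝ) + 1)) := by
  have hQ' : (1 : ℝ) ≤ Q := mod_cast hQ
  let F : ℕ → Set ℝ := fun i ↦
    {x ∈ closedBall x₀ h | ∃ a : ℤ, |x - a / ((i : ℝ) + 1)| ≤ 1 / (((i : ℝ) + 1) * Q)}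
  have hF : ∀ i, volume.real (F i) ≤ 4 * h / Q + 6 / Q * (1 / ((i : ℝ) + 1)) := by
    intro i
    refine (volume_real_closedBall_inter_near_fractions_le (by positivity) x₀ hh
      (by positivity)).trans ?_
    have : 1 / (Q : ℝ) ≤ 1 := div_le_one_of_le₀ hQ' (by positivity)
    calc (2 * ((i : ℝ) + 1) * (h + 1 / ((i + 1) * Q)) + 1) * (2 * (1 / ((i + 1) * Q)))
        = 4 * h / Q + (4 * (1 / (Q : ℝ)) + 2) / Q * (1 / ((i : ℝ) + 1)) := by
          field_simp
          ring
      _ ≤ 4 * h / Q + 6 / Q * (1 / ((i : ℝ) + 1)) := by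
          gcongr
          linarith
  have hsub : closedBall x₀ h ∩ nearSmallDenom Q ⊆ ⋃ i ∈ range (Q / 8), F i := by
    rintro x ⟨hx, r, hr, hxr⟩
    obtain ⟨i, hi⟩ := Nat.exists_eq_succ_of_ne_zero r.den_ne_zero
    refine Set.mem_biUnion (mem_coe.mpr (mem_range.mpr (by lia : i < Q / 8))) ⟨hx, r.num, ?_⟩
    rw [Rat.cast_def, hi, Nat.cast_succ] at hxr
    exact hxr
  have hbdd : Bornology.IsBounded (⋃ i ∈ range (Q / 8), F i) :=
    (Bornology.isBounded_biUnion_finset _).mpr fun _ _ ↦ isBounded_closedBall.subset fun _ hx ↦ hx.1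
  calc volume.real (closedBall x₀ h ∩ nearSmallDenom Q)
      ≤ volume.real (⋃ i ∈ range (Q / 8), F i) := measureReal_mono hsub hbdd.measure_lt_top.ne
    _ ≤ ∑ i ∈ range (Q / 8), (4 * h / Q + 6 / Q * (1 / ((i : ℝ) + 1))) :=
        (measureReal_biUnion_finset_le _ _).trans (sum_le_sum fun i _ ↦ hF i)
    _ = (Q / 8 : ℕ) * (4 * h / Q) + 6 / Q * ∑ i ∈ range (Q / 8), 1 / ((i : ℝ) + 1) := by
        rw [sum_add_distrib, ← mul_sum, sum_const, card_range, nsmul_eq_mul]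
    _ ≤ Q / 8 * (4 * h / Q) + 6 / Q * ∑ i ∈ range Q, 1 / ((i : ℝ) + 1) := by
        gcongr
        · exact Nat.cast_div_le
        · exact Nat.div_le_self Q 8
    _ = h / 2 + 6 * ((Q : ℝ)⁻¹ * ∑ i ∈ range Q, 1 / ((i : ℝ) + 1)) := by
        field_simp
        ring

theorem eventually_volume_real_closedBall_inter_nearSmallDenom_le (x₀ : ℝ) {h : ℝ} (hh : 0 < h) :
    ∀ᶠ Q in atTop, volume.real (closedBall x₀ h ∩ nearSmallDenom Q) ≤ h := by
  have hmean : ∀ᶠ Q : ℕ in atTop, (Q : ℝ)⁻¹ * ∑ i ∈ range Q, 1 / ((i : ℝ) + 1) < h / 12 :=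
    tendsto_one_div_add_atTop_nhds_zero_nat.cesaro.eventually_lt_const (by positivity)
  filter_upwards [hmean, eventually_gt_atTop 0] with Q hQ hQ₀
  linarith [volume_real_closedBall_inter_nearSmallDenom_le hQ₀ x₀ hh.le]

/-- The distance `16 / Q ^ 2` within which typical points have a shifted fraction of order `Q`. -/
noncomputable def approxScale (Q : ℕ) : ℝ≥0 := 16 / (Q : ℝ≥0) ^ 2

theorem coe_approxScale (Q : ℕ) : (approxScale Q : ℝ) = 16 / (Q : ℝ) ^ 2 := by
  simp [approxScale]

theorem approxScale_pos {Q : ℕ} (hQ : 0 < Q) : 0 < approxScale Q := by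
  unfold approxScale
  positivity

theorem tendsto_coe_approxScale : Tendsto (fun Q ↦ (approxScale Q : ℝ)) atTop (𝓝 0) := by
  simp only [coe_approxScale]
  exact tendsto_const_nhds.div_atTop
    ((tendsto_pow_atTop two_ne_zero).comp tendsto_natCast_atTop_atTop)

theorem exists_mem_shiftedFractions_of_notMem_nearSmallDenom (γ : ℝ) {Q : ℕ} (hQ : 0 < Q) {x : ℝ}
    (hx : x ∉ nearSmallDenom Q) : ∃ y ∈ shiftedFractions γ Q, dist x y ≤ approxScale Q := by
  obtain ⟨r, hxr, hr⟩ := Real.exists_rat_abs_sub_le_and_den_le x hQ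
  have : (0 : ℝ) < r.den := mod_cast r.den_pos
  have : (0 : ℝ) < Q := mod_cast hQ
  have hxr' : |x - r| ≤ 1 / (r.den * Q) := hxr.trans <| by
    rw [mul_comm]
    gcongr
    linarith
  have hlarge : (Q : ℝ) < 8 * r.den := by
    by_contra! hle
    exact hx ⟨r, mod_cast hle, hxr'⟩
  obtain ⟨y, hy, hxy⟩ := exists_mem_shiftedFractions_abs_sub_le γ hr hxr'
  refine ⟨y, hy, hxy.trans ?_⟩
  rw [coe_approxScale, div_le_div_iff₀ (by positivity) (by positivity)]
  nlinarith

theorem closedBall_subset_nearSmallDenom_union (γ x₀ : ℝ) {h : ℝ} {Q : ℕ} (hQ : 0 < Q)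
    (hscale : approxScale Q ≤ h / 2) {P : Set ℝ}
    (hP : IsCover (approxScale Q) (shiftedFractions γ Q ∩ closedBall x₀ (3 / 2 * h)) P) :
    closedBall x₀ h ⊆ nearSmallDenom Q ∪ ⋃ z ∈ P, closedBall z (2 * approxScale Q) := by
  intro x hx
  by_cases hxbad : x ∈ nearSmallDenom Q
  · exact .inl hxbad
  obtain ⟨y, hy, hxy⟩ := exists_mem_shiftedFractions_of_notMem_nearSmallDenom γ hQ hxbad
  have hyball : y ∈ closedBall x₀ (3 / 2 * h) := by
    rw [mem_closedBall] at hx ⊢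
    linarith [dist_triangle_left y x₀ x]
  obtain ⟨z, hz, hyz⟩ :=
    Set.mem_iUnion₂.mp (isCover_iff_subset_iUnion_closedBall.mp hP ⟨hy, hyball⟩)
  refine .inr (Set.mem_biUnion hz ?_)
  rw [mem_closedBall] at hyz ⊢
  linarith [dist_triangle x y z]

theorem eventually_exists_finset_shiftedFractions (γ x₀ : ℝ) {h : ℝ} (hh : 0 < h) :
    ∀ᶠ Q in atTop, ∃ P : Finset ℝ,
      ↑P ⊆ shiftedFractions γ Q ∩ closedBall x₀ (3 / 2 * h) ∧
      IsSeparated (approxScale Q) (P : Set ℝ) ∧ h ≤ #P * (4 * approxScale Q) := by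
  filter_upwards [eventually_volume_real_closedBall_inter_nearSmallDenom_le x₀ hh,
    tendsto_coe_approxScale.eventually_le_const (half_pos hh), eventually_gt_atTop 0]
    with Q hbad hscale hQ
  set R := approxScale Q
  obtain ⟨P, hPsub, hPsep, hPcover⟩ := exists_finset_isSeparated_isCover
    ((isCompact_closedBall x₀ (3 / 2 * h)).totallyBounded.subset
      (Set.inter_subset_right (s := shiftedFractions γ Q))) (approxScale_pos hQ).ne'
  refine ⟨P, hPsub, hPsep, ?_⟩
  have hcover : closedBall x₀ h ⊆
      closedBall x₀ h ∩ nearSmallDenom Q ∪ ⋃ z ∈ P, closedBall z (2 * R) := fun x hx ↦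
    (closedBall_subset_nearSmallDenom_union γ x₀ hQ hscale hPcover hx).imp_left fun hbad ↦
      ⟨hx, hbad⟩
  have hbdd : Bornology.IsBounded
      (closedBall x₀ h ∩ nearSmallDenom Q ∪ ⋃ z ∈ P, closedBall z (2 * R)) :=
    (isBounded_closedBall.subset Set.inter_subset_left).union
      ((Bornology.isBounded_biUnion_finset P).mpr fun _ _ ↦ isBounded_closedBall)
  have hvol : 2 * h ≤ h + #P * (4 * R) := calc
    2 * h = volume.real (closedBall x₀ h) := (Real.volume_real_closedBall hh.le).symm
    _ ≤ volume.real (closedBall x₀ h ∩ nearSmallDenom Q) +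
          volume.real (⋃ z ∈ P, closedBall z (2 * R)) :=
        (measureReal_mono hcover hbdd.measure_lt_top.ne).trans (measureReal_union_le _ _)
    _ ≤ h + ∑ z ∈ P, volume.real (closedBall z (2 * R)) :=
        add_le_add hbad (measureReal_biUnion_finset_le _ _)
    _ = h + #P * (4 * R) := by
        simp only [Real.volume_real_closedBall (show (0 : ℝ) ≤ 2 * R by positivity), sum_const,
          nsmul_eq_mul]
        ring
  linarith

end ShiftedFractions

section Ubiquity

theorem volume_real_thickening_inter_thickening_le_of_card_mul_le {P Q : Finset ℝ} {R S : ℝ≥0}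
    (hP : IsSeparated R (P : Set ℝ)) (hR : 0 < R) (hS : 0 < S) {c δ ε : ℝ} (hQ : #Q * S ≤ c)
    (hδ : 0 ≤ δ) (hε₀ : 0 ≤ ε) (hε : ε ≤ 1 / 2) :
    volume.real (thickening (δ * S) (Q : Set ℝ) ∩ thickening (ε * R) (P : Set ℝ)) ≤
      4 * c * (δ * ε + ε * (R / S)) := by
  have : (0 : ℝ) < R := hR
  have : (0 : ℝ) < S := hS
  calc volume.real (thickening (δ * S) (Q : Set ℝ) ∩ thickening (ε * R) (P : Set ℝ))
      ≤ #Q * ((2 * (δ * S + ε * R) / R + 1) * (2 * (ε * R))) :=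
        volume_real_thickening_inter_thickening_le hP hR (by positivity) (by nlinarith) Q
          (by positivity)
    _ = #Q * S * (4 * δ * ε + 2 * ε * (2 * ε + 1) * (R / S)) := by
        field_simp
        ring
    _ ≤ #Q * S * (4 * δ * ε + 2 * ε * (2 * (1 / 2) + 1) * (R / S)) := by gcongr
    _ = 4 * (#Q * S) * (δ * ε + ε * (R / S)) := by ring
    _ ≤ 4 * c * (δ * ε + ε * (R / S)) := by gcongr

theorem div_le_volume_real_biUnion_thickening {s : Finset ℕ} {P : ℕ → Finset ℝ} {R : ℕ → ℝ≥0}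
    {δ : ℕ → ℝ} {x₀ h : ℝ} (hh : 0 < h) (hR : ∀ n ∈ s, 0 < R n) (hRh : ∀ n ∈ s, R n ≤ h)
    (hratio : ∀ m ∈ s, ∀ n ∈ s, m ≤ n → (R n / R m : ℝ) = (1 / 4) ^ (n - m))
    (hPball : ∀ n ∈ s, ↑(P n) ⊆ closedBall x₀ (3 / 2 * h))
    (hPsep : ∀ n ∈ s, IsSeparated (R n) (P n : Set ℝ))
    (hPcard : ∀ n ∈ s, h ≤ #(P n) * (4 * R n))
    (hδ₀ : ∀ n ∈ s, 0 ≤ δ n) (hδ : ∀ n ∈ s, δ n ≤ 1 / 2) (hsum : 1 ≤ ∑ n ∈ s, δ n) :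
    h / 300 ≤ volume.real (⋃ n ∈ s, thickening (δ n * R n) (P n : Set ℝ)) := by
  have hlower : ∀ n ∈ s, h / 2 * δ n ≤ volume.real (thickening (δ n * R n) (P n : Set ℝ)) := by
    intro n hn
    have hδn := hδ₀ n hn
    have hRn : 2 * (δ n * R n) ≤ R n := by nlinarith [hδ n hn, (R n).coe_nonneg]
    rw [volume_real_thickening_of_isSeparated (hPsep n hn) (by positivity) hRn]
    linarith [mul_le_mul_of_nonneg_right (hPcard n hn) hδn]
  have hcard : ∀ n ∈ s, #(P n) * (R n : ℝ) ≤ 4 * h := fun n hn ↦ by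
    linarith [card_mul_le_of_isSeparated (hPsep n hn) (by positivity) (hPball n hn), hRh n hn]
  have hinter : ∀ m ∈ s, ∀ n ∈ s, m ≤ n →
      volume.real (thickening (δ m * R m) (P m : Set ℝ) ∩ thickening (δ n * R n) (P n : Set ℝ)) ≤
        16 * h * (δ m * δ n + δ n * (1 / 4) ^ (n - m)) := by
    intro m hm n hn hmn
    rw [← hratio m hm n hn hmn, show 16 * h = 4 * (4 * h) by ring]
    exact volume_real_thickening_inter_thickening_le_of_card_mul_le (hPsep n hn) (hR n hn)
      (hR m hm) (hcard m hm) (hδ₀ m hm) (hδ₀ n hn) (hδ n hn)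
  have hCE := sq_le_mul_measureReal_biUnion (μ := volume)
    (fun n _ ↦ isOpen_thickening.measurableSet)
    (fun n _ ↦ (P n).finite_toSet.isBounded.thickening.measure_lt_top.ne) (by positivity)
    (by positivity) (by norm_num) (by norm_num) hδ₀ hsum hlower hinter
  norm_num at hCE
  nlinarith

theorem exists_finset_le_sum_of_not_summable {f : ℕ → ℝ} (hf₀ : ∀ n, 0 ≤ f n) (hf : ¬ Summable f)
    (c : ℝ) (N : ℕ) : ∃ s : Finset ℕ, (∀ n ∈ s, N ≤ n) ∧ c ≤ ∑ n ∈ s, f n := by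
  rw [← summable_nat_add_iff N, not_summable_iff_tendsto_nat_atTop_of_nonneg fun n ↦ hf₀ _] at hf
  obtain ⟨M, hM⟩ := (hf.eventually_ge_atTop c).exists
  refine ⟨(range M).map (addRightEmbedding N), ?_, by rwa [sum_map]⟩
  simp

theorem coe_approxScale_two_pow_div {m n : ℕ} (hmn : m ≤ n) :
    (approxScale (2 ^ n) / approxScale (2 ^ m) : ℝ) = (1 / 4) ^ (n - m) := by
  obtain ⟨k, rfl⟩ := Nat.exists_eq_add_of_le hmn
  have h4 : (4 : ℝ) ^ k = (2 ^ k) ^ 2 := by rw [← pow_mul, mul_comm, pow_mul]; norm_num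
  rw [coe_approxScale, coe_approxScale, Nat.add_sub_cancel_left, one_div, inv_pow, h4]
  push_cast
  rw [pow_add]
  field_simp

theorem div_le_volume_real_biUnion_thickening_inter_closedBall (γ : ℝ) {δ : ℕ → ℝ}
    (hδ₀ : ∀ n, 0 ≤ δ n) (hδ : ∀ n, δ n ≤ 1 / 2) (hsum : ¬ Summable δ) (N : ℕ) (x₀ : ℝ) {h : ℝ}
    (hh : 0 < h) :
    h / 300 ≤ volume.real
      ((⋃ n ≥ N, thickening (δ n * approxScale (2 ^ n)) (shiftedFractions γ (2 ^ n))) ∩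
        closedBall x₀ (2 * h)) := by
  have hpow : Tendsto (fun n : ℕ ↦ 2 ^ n) atTop atTop :=
    tendsto_pow_atTop_atTop_of_one_lt one_lt_two
  obtain ⟨n₀, hn₀⟩ := eventually_atTop.mp <|
    (hpow.eventually (eventually_exists_finset_shiftedFractions γ x₀ hh)).and <|
      (hpow.eventually (tendsto_coe_approxScale.eventually_le_const hh)).and <|
        eventually_ge_atTop N
  choose! P hPsub hPsep hPcard using fun n hn ↦ (hn₀ n hn).1
  obtain ⟨s, hs, hsum'⟩ := exists_finset_le_sum_of_not_summable hδ₀ hsum 1 n₀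
  have hPball : ∀ n ∈ s, ↑(P n) ⊆ closedBall x₀ (3 / 2 * h) := fun n hn ↦
    (hPsub n (hs n hn)).trans Set.inter_subset_right
  have hRh : ∀ n ∈ s, approxScale (2 ^ n) ≤ h := fun n hn ↦ (hn₀ n (hs n hn)).2.1
  refine (div_le_volume_real_biUnion_thickening hh (fun n _ ↦ approxScale_pos (by positivity)) hRh
    (fun m _ n _ ↦ coe_approxScale_two_pow_div) hPball (fun n hn ↦ hPsep n (hs n hn))
    (fun n hn ↦ hPcard n (hs n hn)) (fun n _ ↦ hδ₀ n) (fun n _ ↦ hδ n) hsum').trans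
    (measureReal_mono ?_ (measure_ne_top_of_subset Set.inter_subset_right
      measure_closedBall_lt_top.ne))
  refine Set.iUnion₂_subset fun n hn ↦ Set.subset_inter ?_ ?_
  · exact (thickening_subset_of_subset _
      ((hPsub n (hs n hn)).trans Set.inter_subset_left)).trans
      (Set.subset_biUnion_of_mem (u := fun n ↦ thickening (δ n * approxScale (2 ^ n))
        (shiftedFractions γ (2 ^ n))) (hn₀ n (hs n hn)).2.2)
  · intro x hx
    obtain ⟨z, hz, hxz⟩ := mem_thickening_iff.mp hx
    have hz' := mem_closedBall.mp (hPball n hn hz)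
    have hradius : δ n * approxScale (2 ^ n) ≤ 1 / 2 * h :=
      mul_le_mul (hδ n) (hRh n hn) (approxScale _).coe_nonneg (by norm_num)
    rw [mem_closedBall]
    linarith [dist_triangle x z x₀]

theorem summable_of_summable_min {f : ℕ → ℝ} {c : ℝ} (hc : 0 < c)
    (h : Summable fun n ↦ min (f n) c) : Summable f := by
  refine (summable_congr_atTop ?_).mp h
  filter_upwards [h.tendsto_atTop_zero.eventually_lt_const hc] with n hn
  exact min_eq_left ((min_lt_iff.mp hn).resolve_right (lt_irrefl c)).le

theorem ae_frequently_mem_thickening_shiftedFractions (γ : ℝ) {c : ℕ → ℝ} (hc₀ : ∀ n, 0 ≤ c n)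
    (hc : ¬ Summable c) :
    ∀ᵐ x, ∃ᶠ n in atTop,
      x ∈ thickening (c n * approxScale (2 ^ n)) (shiftedFractions γ (2 ^ n)) := by
  let δ : ℕ → ℝ := fun n ↦ min (c n) (1 / 2)
  have hδ : ¬ Summable δ := fun h ↦ hc (summable_of_summable_min one_half_pos h)
  have hδ₀ : ∀ n, 0 ≤ δ n := fun n ↦ le_min (hc₀ n) one_half_pos.le
  let A : ℕ → Set ℝ := fun N ↦
    ⋃ n ≥ N, thickening (δ n * approxScale (2 ^ n)) (shiftedFractions γ (2 ^ n))
  have hA : ∀ N, MeasurableSet (A N) := fun N ↦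
    (isOpen_biUnion fun _ _ ↦ isOpen_thickening).measurableSet
  have hratio : ∀ N x, ∀ r > 0,
      ENNReal.ofReal (1 / 1200) ≤ volume (A N ∩ closedBall x r) / volume (closedBall x r) := by
    intro N x r hr
    have hlocal := div_le_volume_real_biUnion_thickening_inter_closedBall γ hδ₀
      (fun n ↦ min_le_right _ _) hδ N x (half_pos hr)
    rw [mul_div_cancel₀ r two_ne_zero] at hlocal
    rw [ENNReal.le_div_iff_mul_le (.inl (measure_closedBall_pos volume x hr).ne')
      (.inl measure_closedBall_lt_top.ne), Real.volume_closedBall,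
      ← ENNReal.ofReal_mul (by norm_num)]
    refine ENNReal.ofReal_le_of_le_toReal (le_trans ?_ hlocal)
    linarith
  have hfull : ∀ N, ∀ᵐ x, x ∈ A N := fun N ↦
    ae_mem_of_eventually_le_measure_inter_closedBall_div (hA N)
      (ENNReal.ofReal_pos.mpr (by norm_num)).ne'
      fun x ↦ eventually_nhdsWithin_of_forall (hratio N x)
  filter_upwards [ae_all_iff.mpr hfull] with x hx
  refine frequently_atTop.mpr fun N ↦ ?_
  obtain ⟨n, hn, hxn⟩ := Set.mem_iUnion₂.mp (hx N)
  refine ⟨n, hn, thickening_mono ?_ _ hxn⟩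
  exact mul_le_mul_of_nonneg_right (min_le_left _ _) (approxScale _).coe_nonneg

end Ubiquity

section Approximation

variable {ψ : ℕ → ℝ}

theorem exists_dnint_lt_of_mem_thickening {γ x ρ : ℝ} {Q : ℕ}
    (hx : x ∈ thickening ρ (shiftedFractions γ Q)) :
    ∃ q, Q < q ∧ q ≤ 2 * Q ∧ dnint (q * x - γ) < 2 * Q * ρ := by
  obtain ⟨_, ⟨q, p, hQq, hqQ, rfl⟩, hxy⟩ := mem_thickening_iff.mp hx
  refine ⟨q, hQq, hqQ, ?_⟩
  have hq : (0 : ℝ) < q := mod_cast Nat.zero_lt_of_lt hQq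
  calc dnint (q * x - γ) ≤ |q * x - γ - p| := round_le _ p
    _ = q * dist x ((p + γ) / q) := by
        rw [Real.dist_eq, ← abs_of_pos hq, ← abs_mul, abs_of_pos hq]
        congr 1
        field_simp
        ring
    _ < q * ρ := by gcongr
    _ ≤ 2 * Q * ρ := by
        have : 0 ≤ ρ := dist_nonneg.trans hxy.le
        gcongr
        exact_mod_cast hqQ

theorem not_summable_two_pow_mul (hψ : ∀ q, 1 ≤ q → 0 ≤ ψ q) (hanti : AntitoneOn ψ (Set.Ici 1))
    (hdiv : ¬ Summable ψ) : ¬ Summable fun n ↦ 2 ^ n * ψ (2 ^ (n + 1)) / 32 := by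
  intro h
  have hmono : ∀ᶠ k in atTop, ψ (k + 1) ≤ ψ k := by
    filter_upwards [eventually_ge_atTop 1] with k hk
    exact hanti hk (Nat.le_succ_of_le hk) k.le_succ
  have hnonneg : 0 ≤ᶠ[atTop] ψ := (eventually_ge_atTop 1).mono hψ
  refine hdiv ((summable_condensed_iff_of_eventually_nonneg hnonneg hmono).mp ?_)
  rw [← summable_nat_add_iff 1]
  refine (h.mul_left 64).congr fun n ↦ ?_
  ring

theorem ae_infinite_dnint_lt (hψ : ∀ q, 1 ≤ q → 0 ≤ ψ q) (hanti : AntitoneOn ψ (Set.Ici 1))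
    (hdiv : ¬ Summable ψ) (γ : ℝ) :
    ∀ᵐ x : ℝ, {q : ℕ | 0 < q ∧ dnint (q * x - γ) < ψ q}.Infinite := by
  filter_upwards [ae_frequently_mem_thickening_shiftedFractions γ
    (fun n ↦ div_nonneg (mul_nonneg (by positivity) (hψ _ Nat.one_le_two_pow)) (by norm_num))
    (not_summable_two_pow_mul hψ hanti hdiv)] with x hx
  refine Set.infinite_of_forall_exists_gt fun N ↦ ?_
  obtain ⟨n, hNn, hxn⟩ := frequently_atTop.mp hx N
  obtain ⟨q, hnq, hqn, hq⟩ := exists_dnint_lt_of_mem_thickening hxn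
  have hNq : N < q := (hNn.trans_lt n.lt_two_pow_self).trans hnq
  refine ⟨q, ⟨Nat.zero_lt_of_lt hNq, ?_⟩, hNq⟩
  calc dnint (q * x - γ)
      < 2 * (2 ^ n : ℕ) * (2 ^ n * ψ (2 ^ (n + 1)) / 32 * approxScale (2 ^ n)) := hq
    _ = ψ (2 ^ (n + 1)) := by
        rw [coe_approxScale]
        push_cast
        field_simp
        ring
    _ ≤ ψ q := hanti (Set.mem_Ici.mpr (by lia)) (Set.mem_Ici.mpr Nat.one_le_two_pow)
        (hqn.trans_eq (pow_succ' 2 n).symm)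

theorem not_summable_of_tendsto_sum_Icc_atTop
    (hdiv : Tendsto (fun Q ↦ ∑ q ∈ Icc 1 Q, ψ q) atTop atTop) : ¬ Summable ψ := by
  intro h
  have hshift : Tendsto (fun Q ↦ ∑ q ∈ range Q, ψ (q + 1)) atTop atTop :=
    hdiv.congr fun Q ↦ by
      rw [range_eq_Ico, sum_Ico_add' ψ 0 Q 1, zero_add, Ico_add_one_right_eq_Icc]
  exact not_tendsto_atTop_of_tendsto_nhds
    ((summable_nat_add_iff 1).mpr h).tendsto_sum_tsum_nat hshift

theorem stmt3_general (hψ : ∀ q, 1 ≤ q → 0 ≤ ψ q) (hanti : AntitoneOn ψ (Set.Ici 1))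
    (hdiv : ¬ Summable ψ) (γ : ℝ) : volume (W ψ γ) = 1 := by
  have hW : W ψ γ =ᵐ[volume] Set.Icc (0 : ℝ) 1 := by
    filter_upwards [ae_infinite_dnint_lt hψ hanti hdiv γ] with x hx
    exact propext (and_iff_left hx)
  rw [measure_congr hW, Real.volume_Icc, sub_zero, ENNReal.ofReal_one]

end Approximation

theorem stmt3 (ψ : ℕ → ℝ) (hψpos : ∀ q, 1 ≤ q → 0 < ψ q)
    (hψhalf : ∀ q, 1 ≤ q → ψ q < 1/2)
    (hmono : ∀ q q' : ℕ, 1 ≤ q → q ≤ q' → ψ q' ≤ ψ q)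
    (hdiv : Tendsto (fun Q : ℕ => ∑ q ∈ Finset.Icc 1 Q, ψ q) atTop atTop)
    (γ : ℝ) (hγ : Irrational γ) (htame : TamelyLiouville γ) :
    volume (W ψ γ) = 1 :=
  stmt3_general (fun q hq ↦ (hψpos q hq).le) (fun q hq q' _ ↦ hmono q q' hq)
    (not_summable_of_tendsto_sum_Icc_atTop hdiv) γ
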